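/- Let Γ = S_2 with trivial representation τ and sign representation σ. Define a graded representation V by V^0 = V^3 = τ ⊕ σ^{⊕3}, V^1 = V^2 = τ^{⊕2} ⊕ σ^{⊕2}, and V^i = 0 otherwise. Then V is weakly equivariantly log concave (V^{i-1} ⊗ V^{i+1} embeds into V^i ⊗ V^i for all i), but V is not strongly equivariantly log concave: V^0 ⊗ V^3 ≅ τ^{⊕10} ⊕ σ^{⊕6} is not isomorphic to a subrepresentation of V^1 ⊗ V^2 ≅ τ^{⊕8} ⊕ σ^{⊕8}. -/

import Mathlib

open CategoryTheory MonoidalCategory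

noncomputable section

/-- The external direct sum of a finite family of representations. -/
def Representation.pi' {k G : Type*} [CommSemiring k] [Monoid G] {ι : Type*}
    {M : ι → Type*} [∀ i, AddCommMonoid (M i)] [∀ i, Module k (M i)]
    (ρ : ∀ i, Representation k G (M i)) : Representation k G (∀ i, M i) where
  toFun g := LinearMap.pi fun i => (ρ i g) ∘ₗ LinearMap.proj i
  map_one' := by ext; simp
  map_mul' g h := by ext; simp

/-- The sign representation of `S₂` on `ℚ`. -/
def signRepAux : Representation ℚ (Equiv.Perm (Fin 2)) ℚ where
  toFun g := ((Equiv.Perm.sign g : ℤ) : ℚ) • LinearMap.id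
  map_one' := by simp; rfl
  map_mul' g h := by ext; simp [smul_smul]; ring

/-- `τ^{⊕ a} ⊕ σ^{⊕ b}`, where `τ` is the trivial representation of `S₂` and `σ` is the
sign representation. -/
def VS2 (a b : ℕ) : FDRep ℚ (Equiv.Perm (Fin 2)) :=
  FDRep.of (Representation.pi' fun x : Fin a ⊕ Fin b =>
    Sum.elim (fun _ => Representation.trivial ℚ (G := Equiv.Perm (Fin 2)) (V := ℚ))
      (fun _ => signRepAux) x)

/-- `X` is isomorphic to a subrepresentation of `Y`. -/
def IsSubrep (X Y : FDRep ℚ (Equiv.Perm (Fin 2))) : Prop := ∃ f : X ⟶ Y, Mono f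

/-- The graded representation of Example 2.2:
`V^0 = V^3 = τ ⊕ σ^{⊕3}`, `V^1 = V^2 = τ^{⊕2} ⊕ σ^{⊕2}`, `V^i = 0` otherwise. -/
def Vex : ℕ → FDRep ℚ (Equiv.Perm (Fin 2)) := fun i =>
  if i = 0 ∨ i = 3 then VS2 1 3 else if i = 1 ∨ i = 2 then VS2 2 2 else VS2 0 0

/-- The character of `S₂` attached to a Boolean: trivial for `false`, sign for `true`. -/
def chi (c : Bool) (g : Equiv.Perm (Fin 2)) : ℚ :=
  if c then ((Equiv.Perm.sign g : ℤ) : ℚ) else 1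

lemma chi_xor (c d : Bool) (g : Equiv.Perm (Fin 2)) : chi (xor c d) g = chi c g * chi d g := by
  rcases Int.units_eq_one_or (Equiv.Perm.sign g) with h | h <;>
    cases c <;> cases d <;> simp [chi, h]

/-- `X` has a basis of eigenvectors with characters prescribed by `s`. -/
def HasType (X : FDRep ℚ (Equiv.Perm (Fin 2))) {ι : Type} (s : ι → Bool) : Prop :=
  ∃ b : Module.Basis ι ℚ X, ∀ g i, FDRep.ρ X g (b i) = chi (s i) g • b i

/-- The type of `VS2 a b`. -/
def ty (a b : ℕ) : Fin a ⊕ Fin b → Bool := Sum.elim (fun _ => false) (fun _ => true)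

lemma VS2_rho (a b : ℕ) (g : Equiv.Perm (Fin 2)) (v : Fin a ⊕ Fin b → ℚ) (i : Fin a ⊕ Fin b) :
    (FDRep.ρ (VS2 a b) g v : Fin a ⊕ Fin b → ℚ) i = chi (ty a b i) g * v i := by
  cases i with
  | inl i => exact (one_mul _).symm
  | inr i => rfl

lemma hasType_VS2 (a b : ℕ) : HasType (VS2 a b) (ty a b) := by
  refine ⟨(Pi.basisFun ℚ (Fin a ⊕ Fin b) : Module.Basis _ ℚ (Fin a ⊕ Fin b → ℚ)), fun g i => ?_⟩
  refine funext fun j => ?_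
  refine (VS2_rho a b g _ j).trans ?_
  change _ = chi (ty a b i) g * (Pi.basisFun ℚ (Fin a ⊕ Fin b) i j)
  by_cases h : j = i
  · subst h; rfl
  · have hz : (Pi.basisFun ℚ (Fin a ⊕ Fin b) i : Fin a ⊕ Fin b → ℚ) j = 0 := by
      rw [Pi.basisFun_apply]
      exact Pi.single_eq_of_ne h _
    have h1 : chi (ty a b j) g * (Pi.basisFun ℚ (Fin a ⊕ Fin b) i : Fin a ⊕ Fin b → ℚ) j =
        chi (ty a b i) g * (Pi.basisFun ℚ (Fin a ⊕ Fin b) i : Fin a ⊕ Fin b → ℚ) j := by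
      rw [hz, mul_zero, mul_zero]
    exact h1

lemma HasType.tensor {X Y : FDRep ℚ (Equiv.Perm (Fin 2))} {ι κ : Type} {s : ι → Bool}
    {t : κ → Bool} (hX : HasType X s) (hY : HasType Y t) :
    HasType (X ⊗ Y) (fun p : ι × κ => xor (s p.1) (t p.2)) := by
  obtain ⟨b, hb⟩ := hX
  obtain ⟨c, hc⟩ := hY
  refine ⟨(b.tensorProduct c : Module.Basis (ι × κ) ℚ (TensorProduct ℚ X Y)), fun g p => ?_⟩
  have h1 : FDRep.ρ (X ⊗ Y) g = TensorProduct.map (FDRep.ρ X g) (FDRep.ρ Y g) := rfl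
  have h2 : TensorProduct.map (FDRep.ρ X g) (FDRep.ρ Y g) (b.tensorProduct c p) =
      chi (xor (s p.1) (t p.2)) g • b.tensorProduct c p := by
    rw [Module.Basis.tensorProduct_apply', TensorProduct.map_tmul, hb, hc, chi_xor,
      TensorProduct.smul_tmul_smul]
  exact h2

/-- Build a morphism from an equivariant linear map. -/
def mkHom {X Y : FDRep ℚ (Equiv.Perm (Fin 2))} (f : X →ₗ[ℚ] Y)
    (hf : ∀ g, f ∘ₗ FDRep.ρ X g = FDRep.ρ Y g ∘ₗ f) : X ⟶ Y :=
  ⟨FGModuleCat.ofHom f, fun g => by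
    ext x
    exact LinearMap.congr_fun (hf g) x⟩

lemma HasType.comm {X Y : FDRep ℚ (Equiv.Perm (Fin 2))} {ι κ : Type} {s : ι → Bool}
    {t : κ → Bool} {b : Module.Basis ι ℚ X} (hb : ∀ g i, FDRep.ρ X g (b i) = chi (s i) g • b i)
    {c : Module.Basis κ ℚ Y} (hc : ∀ g i, FDRep.ρ Y g (c i) = chi (t i) g • c i)
    (e : ι → κ) (he : ∀ i, t (e i) = s i) (f : X →ₗ[ℚ] Y) (hf : ∀ i, f (b i) = c (e i)) (g) :
    f ∘ₗ FDRep.ρ X g = FDRep.ρ Y g ∘ₗ f := by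
  refine b.ext fun i => ?_
  rw [LinearMap.comp_apply, LinearMap.comp_apply, hb, map_smul, hf, hc, he]

lemma HasType.iso {X Y : FDRep ℚ (Equiv.Perm (Fin 2))} {ι κ : Type} {s : ι → Bool}
    {t : κ → Bool} (hX : HasType X s) (hY : HasType Y t) (e : ι ≃ κ)
    (he : ∀ i, t (e i) = s i) : Nonempty (X ≅ Y) := by
  obtain ⟨b, hb⟩ := hX
  obtain ⟨c, hc⟩ := hY
  let E : X ≃ₗ[ℚ] Y := b.equiv c e
  refine ⟨⟨mkHom E.toLinearMap (HasType.comm hb hc e he _ fun i => by simp [E]),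
    mkHom E.symm.toLinearMap (HasType.comm hc hb e.symm (fun i => by rw [← he]; simp) _
      fun i => by simp [E]), ?_, ?_⟩⟩
  · ext x
    exact E.symm_apply_apply x
  · ext x
    exact E.apply_symm_apply x

lemma IsSubrep.of_iso {X Y : FDRep ℚ (Equiv.Perm (Fin 2))} (h : Nonempty (X ≅ Y)) :
    IsSubrep X Y := by
  obtain ⟨e⟩ := h
  exact ⟨e.hom, inferInstance⟩

lemma HasType.isSubrep_of_isEmpty {X Y : FDRep ℚ (Equiv.Perm (Fin 2))} {ι : Type} [IsEmpty ι]
    {s : ι → Bool} (hX : HasType X s) : IsSubrep X Y := by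
  obtain ⟨b, -⟩ := hX
  refine ⟨0, ⟨fun {Z} g h _ => ?_⟩⟩
  have : Subsingleton X := b.repr.toEquiv.subsingleton
  ext x
  exact Subsingleton.elim (α := X) _ _

/-- Boolean-typed index sets are matched as soon as the numbers of `false` and `true` agree. -/
lemma exists_equiv {ι κ : Type} [Fintype ι] [Fintype κ] (s : ι → Bool) (t : κ → Bool)
    (h : ∀ c, Fintype.card {i // s i = c} = Fintype.card {i // t i = c}) :
    ∃ e : ι ≃ κ, ∀ i, t (e i) = s i := by
  refine ⟨Equiv.ofFiberEquiv (f := s) (g := t) fun c => Fintype.equivOfCardEq (h c), fun i => ?_⟩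
  exact Equiv.ofFiberEquiv_map _ i

lemma not_sub : ¬ IsSubrep (VS2 10 6) (VS2 8 8) := by
  rintro ⟨f, hf⟩
  let F : (Fin 10 ⊕ Fin 6 → ℚ) →ₗ[ℚ] (Fin 8 ⊕ Fin 8 → ℚ) := f.hom.hom.hom
  have hinj : Function.Injective F := by
    have h1 : Mono ((Action.forget (FGModuleCat ℚ) (Equiv.Perm (Fin 2)) ⋙
      forget₂ (FGModuleCat ℚ) (ModuleCat ℚ)).map f) := inferInstance
    exact (ModuleCat.mono_iff_injective _).1 h1
  have hcomm : ∀ g x, F (FDRep.ρ (VS2 10 6) g x) = FDRep.ρ (VS2 8 8) g (F x) := fun g x =>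
    ConcreteCategory.congr_hom (f.comm g) x
  let inc : (Fin 10 → ℚ) →ₗ[ℚ] (Fin 10 ⊕ Fin 6 → ℚ) :=
    { toFun := fun x => Sum.elim x 0
      map_add' := fun x y => by ext (i | i) <;> simp
      map_smul' := fun c x => by ext (i | i) <;> simp }
  let G : (Fin 10 → ℚ) →ₗ[ℚ] (Fin 8 → ℚ) := LinearMap.funLeft ℚ ℚ Sum.inl ∘ₗ F ∘ₗ inc
  have hG : Function.Injective G := by
    rw [injective_iff_map_eq_zero]
    intro x hx
    have hfix : FDRep.ρ (VS2 10 6) (Equiv.swap 0 1) (inc x) = inc x := by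
      refine funext fun i => ?_
      refine (VS2_rho 10 6 _ _ i).trans ?_
      rcases i with i | i <;> simp [ty, chi, inc]
    have h2 := hcomm (Equiv.swap 0 1) (inc x)
    rw [hfix] at h2
    have h0 : F (inc x) = 0 := by
      funext i
      rcases i with i | i
      · exact congrFun hx i
      · have h3 := (congrFun h2 (Sum.inr i)).trans (VS2_rho 8 8 _ _ _)
        simp [ty, chi] at h3
        change _ = (0 : ℚ)
        linarith
    have h4 : inc x = 0 := hinj (h0.trans (map_zero F).symm)
    funext i
    exact congrFun h4 (Sum.inl i)
  have := LinearMap.finrank_le_finrank_of_injective hG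
  simp at this

/-- `V` is weakly equivariantly log concave, `V^0 ⊗ V^3 ≅ τ^{⊕10} ⊕ σ^{⊕6}`,
`V^1 ⊗ V^2 ≅ τ^{⊕8} ⊕ σ^{⊕8}`, `V^0 ⊗ V^3` is not isomorphic to a subrepresentation of
`V^1 ⊗ V^2`, and hence `V` is not strongly equivariantly log concave. -/
theorem stmt7 :
    (∀ i : ℕ, 1 ≤ i → IsSubrep (Vex (i - 1) ⊗ Vex (i + 1)) (Vex i ⊗ Vex i)) ∧
    Nonempty ((Vex 0 ⊗ Vex 3) ≅ VS2 10 6) ∧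
    Nonempty ((Vex 1 ⊗ Vex 2) ≅ VS2 8 8) ∧
    ¬ IsSubrep (Vex 0 ⊗ Vex 3) (Vex 1 ⊗ Vex 2) ∧
    ¬ (∀ i j k l : ℕ, i ≤ j → j ≤ k → k ≤ l → j + k = i + l →
        IsSubrep (Vex i ⊗ Vex l) (Vex j ⊗ Vex k)) := by
  have h03 : Nonempty ((Vex 0 ⊗ Vex 3) ≅ VS2 10 6) := by
    obtain ⟨e, he⟩ := exists_equiv (fun p : (Fin 1 ⊕ Fin 3) × (Fin 1 ⊕ Fin 3) =>
      xor (ty 1 3 p.1) (ty 1 3 p.2)) (ty 10 6) (by decide)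
    exact ((hasType_VS2 1 3).tensor (hasType_VS2 1 3)).iso (hasType_VS2 10 6) e he
  have h12 : Nonempty ((Vex 1 ⊗ Vex 2) ≅ VS2 8 8) := by
    obtain ⟨e, he⟩ := exists_equiv (fun p : (Fin 2 ⊕ Fin 2) × (Fin 2 ⊕ Fin 2) =>
      xor (ty 2 2 p.1) (ty 2 2 p.2)) (ty 8 8) (by decide)
    exact ((hasType_VS2 2 2).tensor (hasType_VS2 2 2)).iso (hasType_VS2 8 8) e he
  have hns : ¬ IsSubrep (Vex 0 ⊗ Vex 3) (Vex 1 ⊗ Vex 2) := by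
    rintro ⟨f, hf⟩
    obtain ⟨e⟩ := h03
    obtain ⟨e'⟩ := h12
    exact not_sub ⟨e.inv ≫ f ≫ e'.hom, inferInstance⟩
  refine ⟨fun i hi => ?_, h03, h12, hns, fun h => hns (h 0 1 2 3 (by norm_num) (by norm_num)
    (by norm_num) rfl)⟩
  by_cases h1 : i = 1
  · subst h1
    obtain ⟨e, he⟩ := exists_equiv (fun p : (Fin 1 ⊕ Fin 3) × (Fin 2 ⊕ Fin 2) =>
      xor (ty 1 3 p.1) (ty 2 2 p.2)) (fun p : (Fin 2 ⊕ Fin 2) × (Fin 2 ⊕ Fin 2) =>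
      xor (ty 2 2 p.1) (ty 2 2 p.2)) (by decide)
    exact IsSubrep.of_iso (((hasType_VS2 1 3).tensor (hasType_VS2 2 2)).iso
      ((hasType_VS2 2 2).tensor (hasType_VS2 2 2)) e he)
  by_cases h2 : i = 2
  · subst h2
    obtain ⟨e, he⟩ := exists_equiv (fun p : (Fin 2 ⊕ Fin 2) × (Fin 1 ⊕ Fin 3) =>
      xor (ty 2 2 p.1) (ty 1 3 p.2)) (fun p : (Fin 2 ⊕ Fin 2) × (Fin 2 ⊕ Fin 2) =>
      xor (ty 2 2 p.1) (ty 2 2 p.2)) (by decide)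
    exact IsSubrep.of_iso (((hasType_VS2 2 2).tensor (hasType_VS2 1 3)).iso
      ((hasType_VS2 2 2).tensor (hasType_VS2 2 2)) e he)
  have h3 : Vex (i + 1) = VS2 0 0 := by
    unfold Vex
    rw [if_neg (by omega), if_neg (by omega)]
  rw [h3]
  obtain ⟨a, b, hab⟩ : ∃ a b, Vex (i - 1) = VS2 a b := by
    unfold Vex
    split_ifs <;> exact ⟨_, _, rfl⟩
  rw [hab]
  exact ((hasType_VS2 a b).tensor (hasType_VS2 0 0)).isSubrep_of_isEmpty

end
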